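/- Let E be the elliptic curve y² = x³ + ax + b over the finite field F_p (p > 3 prime, with 4a³ + 27b² ≠ 0 in F_p), and let a_p = p + 1 − #E(F_p). Then |a_p| ≤ 2·√p. -/

import Mathlib

/-!
The idea is due to Manin. Reduce to `E : y² = f(x)` with `f` cubic, over the field with `q`
elements, and twist `E` by `f(t)` over the field of rational functions in `t`. The twist has the
points `Q = (t f, f²)`, which is generic, and `φ = (t ^ q f, f ^ ((q - 1) / 2 + 2))`, which is its
image under Frobenius. Let the height `h(P)` be the degree of the rational function `x(P) / f`.
The map taking the unordered pair `x(P), x(Q)` to `x(P + Q), x(P - Q)` is given by quadratic forms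
in the elementary symmetric functions. Since these forms have no common zero, even modulo primes
of `F[t]`, the height satisfies the parallelogram law. Directly from the definition, `h(Q) = 1`
and `h(φ) = q`, and a count of common factors gives `h(φ - Q) = #E`. Hence
`h(φ + n Q) = n² + (q + 1 - #E) n + q` for all integers `n`. The left side is nonnegative, which
bounds the discriminant of the right side.
-/

open Polynomial WeierstrassCurve

section Unimodular

variable {R ι : Type*} [CommRing R] {v : ι → R}

/-- A vector over a commutative ring is unimodular if its entries generate the unit ideal. Over
`F[X]` these are the projective coordinate vectors in lowest terms. -/
def IsUnimodular (v : ι → R) : Prop :=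
  Ideal.span (Set.range v) = ⊤

lemma isUnimodular_iff_forall_isMaximal :
    IsUnimodular v ↔ ∀ M : Ideal R, M.IsMaximal → Ideal.Quotient.mk M ∘ v ≠ 0 := by
  have hspan (M : Ideal R) : Ideal.Quotient.mk M ∘ v = 0 ↔ Ideal.span (Set.range v) ≤ M := by
    simp [funext_iff, Ideal.span_le, Set.range_subset_iff, Ideal.Quotient.eq_zero_iff_mem]
  simp only [ne_eq, hspan]
  refine ⟨fun hv M hM hle ↦ hM.ne_top (top_le_iff.mp (hv ▸ hle)), fun h ↦ ?_⟩
  by_contra hv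
  obtain ⟨M, hM, hle⟩ := Ideal.exists_le_maximal _ hv
  exact h M hM hle

lemma isUnimodular_pair {a b : R} : IsUnimodular ![a, b] ↔ IsCoprime a b := by
  rw [IsUnimodular, Matrix.range_cons_cons_empty, Ideal.eq_top_iff_one, Ideal.mem_span_pair,
    IsCoprime]

lemma IsUnimodular.ne_zero [Nontrivial R] (hv : IsUnimodular v) : v ≠ 0 := by
  rintro rfl
  obtain ⟨M, hM⟩ := Ideal.exists_maximal R
  exact isUnimodular_iff_forall_isMaximal.mp hv M hM (by ext; simp)

lemma IsUnimodular.isUnit_of_forall_dvd (hv : IsUnimodular v) {d : R} (hd : ∀ i, d ∣ v i) :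
    IsUnit d := by
  rw [← Ideal.span_singleton_eq_top, eq_top_iff, ← hv, Ideal.span_le, Set.range_subset_iff]
  exact fun i ↦ Ideal.mem_span_singleton.mpr (hd i)

end Unimodular

section SymProd

variable {R S : Type*}

/-- The coefficients of the product of the binary linear forms with coefficients `p` and `q`,
which are the coordinates on `Sym² ℙ¹ ≃ ℙ²` used by `WeierstrassCurve.Affine.Point.sym2x`. -/
def symProd [CommSemiring R] (p q : Fin 2 → R) : Fin 3 → R :=
  ![p 0 * q 0, p 0 * q 1 + p 1 * q 0, p 1 * q 1]

lemma smul_symProd_smul [CommSemiring R] (k l : R) (p q : Fin 2 → R) :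
    symProd (k • p) (l • q) = (k * l) • symProd p q := by
  ext i
  fin_cases i <;> simp [symProd] <;> ring

lemma comp_symProd [CommSemiring R] [CommSemiring S] (φ : R →+* S) (p q : Fin 2 → R) :
    φ ∘ symProd p q = symProd (φ ∘ p) (φ ∘ q) := by
  ext i
  fin_cases i <;> simp [symProd]

lemma symProd_ne_zero [CommRing R] [NoZeroDivisors R] {p q : Fin 2 → R} (hp : p ≠ 0)
    (hq : q ≠ 0) : symProd p q ≠ 0 := by
  contrapose! hp
  have h₀ := congrFun hp 0
  have h₁ := congrFun hp 1
  have h₂ := congrFun hp 2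
  simp only [symProd, Matrix.cons_val, Pi.zero_apply, mul_eq_zero] at h₀ h₁ h₂
  simp only [ne_eq, funext_iff, Fin.forall_fin_two, Pi.zero_apply] at hq ⊢
  grind [mul_eq_zero]

lemma IsUnimodular.symProd [CommRing R] {p q : Fin 2 → R} (hp : IsUnimodular p)
    (hq : IsUnimodular q) : IsUnimodular (symProd p q) := by
  rw [isUnimodular_iff_forall_isMaximal] at hp hq ⊢
  intro M hM
  have := hM.isPrime
  rw [comp_symProd]
  exact symProd_ne_zero (hp M hM) (hq M hM)

end SymProd

section Degree

variable {R ι : Type*} [Fintype ι]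

/-- The largest degree of the entries of a vector of polynomials. -/
def maxNatDegree [Semiring R] (v : ι → R[X]) : ℕ :=
  Finset.univ.sup fun i ↦ (v i).natDegree

lemma natDegree_le_maxNatDegree [Semiring R] (v : ι → R[X]) (i : ι) :
    (v i).natDegree ≤ maxNatDegree v :=
  Finset.le_sup (f := fun i ↦ (v i).natDegree) (Finset.mem_univ i)

lemma maxNatDegree_pair [Semiring R] (f g : R[X]) :
    maxNatDegree ![f, g] = max f.natDegree g.natDegree := by
  simp [maxNatDegree, Fin.univ_succ]

lemma maxNatDegree_eq [Semiring R] {v : ι → R[X]} {d : ℕ} (hle : ∀ i, (v i).natDegree ≤ d)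
    (hne : (fun i ↦ (v i).coeff d) ≠ 0) : maxNatDegree v = d := by
  obtain ⟨i, hi⟩ := Function.ne_iff.mp hne
  exact le_antisymm (Finset.sup_le fun i _ ↦ hle i)
    ((le_natDegree_of_ne_zero hi).trans (natDegree_le_maxNatDegree v i))

lemma coeff_maxNatDegree_ne_zero [Semiring R] {v : ι → R[X]} (hv : v ≠ 0) :
    (fun i ↦ (v i).coeff (maxNatDegree v)) ≠ 0 := by
  obtain ⟨j, hj⟩ := Function.ne_iff.mp hv
  obtain ⟨i, -, hi : maxNatDegree v = (v i).natDegree⟩ := Finset.exists_mem_eq_sup Finset.univ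
    ⟨j, Finset.mem_univ j⟩ fun i ↦ (v i).natDegree
  intro hzero
  have hvi : v i = 0 := by simpa [hi] using congrFun hzero i
  have hmax : maxNatDegree v = 0 := by rw [hi, hvi, natDegree_zero]
  have hvj : (v j).natDegree ≤ 0 := hmax ▸ natDegree_le_maxNatDegree v j
  apply hj
  rw [eq_C_of_natDegree_le_zero hvj, ← hmax, show (v j).coeff (maxNatDegree v) = 0 from
    congrFun hzero j, C_0, Pi.zero_apply]

lemma maxNatDegree_symProd [CommRing R] [IsDomain R] {p q : Fin 2 → R[X]} (hp : p ≠ 0)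
    (hq : q ≠ 0) : maxNatDegree (symProd p q) = maxNatDegree p + maxNatDegree q := by
  have hp' := natDegree_le_maxNatDegree p
  have hq' := natDegree_le_maxNatDegree q
  refine maxNatDegree_eq (fun i ↦ ?_) ?_
  · fin_cases i
    · exact natDegree_mul_le_of_le (hp' 0) (hq' 0)
    · exact natDegree_add_le_of_degree_le (natDegree_mul_le_of_le (hp' 0) (hq' 1))
        (natDegree_mul_le_of_le (hp' 1) (hq' 0))
    · exact natDegree_mul_le_of_le (hp' 1) (hq' 1)
  · convert symProd_ne_zero (coeff_maxNatDegree_ne_zero hp) (coeff_maxNatDegree_ne_zero hq)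
      using 1
    ext i
    fin_cases i <;> simp [symProd, coeff_mul_add_eq_of_natDegree_le, hp', hq']

end Degree

section HomogeneousForm

variable {R ι κ : Type*} [CommSemiring R] {x : ι → R[X]} {n d : ℕ}

lemma coeff_prod_sum_of_natDegree_le (s : Finset ι) {e : ι → ℕ}
    (hx : ∀ i ∈ s, (x i).natDegree ≤ e i) :
    (∏ i ∈ s, x i).coeff (∑ i ∈ s, e i) = ∏ i ∈ s, (x i).coeff (e i) := by
  induction s using Finset.cons_induction with
  | empty => simp
  | cons j s hj ih =>
    rw [Finset.forall_mem_cons] at hx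
    rw [Finset.prod_cons, Finset.sum_cons, Finset.prod_cons, ← ih hx.2]
    exact coeff_mul_add_eq_of_natDegree_le hx.1
      ((natDegree_prod_le s x).trans (Finset.sum_le_sum hx.2))

lemma natDegree_aeval_le_of_isHomogeneous {P : MvPolynomial ι R} (hP : P.IsHomogeneous n)
    (hx : ∀ i, (x i).natDegree ≤ d) : (MvPolynomial.aeval x P).natDegree ≤ n * d := by
  rw [MvPolynomial.aeval_def, MvPolynomial.eval₂_eq]
  refine natDegree_sum_le_of_forall_le _ _ fun m hm ↦ (natDegree_C_mul_le _ _).trans ?_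
  rw [hP.degree_eq_sum_deg_support hm, Finset.sum_mul]
  exact (natDegree_prod_le _ _).trans
    (Finset.sum_le_sum fun i _ ↦ natDegree_pow_le_of_le _ (hx i))

lemma coeff_aeval_of_isHomogeneous {P : MvPolynomial ι R} (hP : P.IsHomogeneous n)
    (hx : ∀ i, (x i).natDegree ≤ d) :
    (MvPolynomial.aeval x P).coeff (n * d) = MvPolynomial.eval (fun i ↦ (x i).coeff d) P := by
  rw [MvPolynomial.aeval_def, MvPolynomial.eval₂_eq, finsetSum_coeff, MvPolynomial.eval_eq]
  refine Finset.sum_congr rfl fun m hm ↦ ?_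
  rw [algebraMap_eq, coeff_C_mul, hP.degree_eq_sum_deg_support hm, Finset.sum_mul,
    coeff_prod_sum_of_natDegree_le _ fun i _ ↦ natDegree_pow_le_of_le _ (hx i)]
  simp only [coeff_pow_of_natDegree_le (hx _)]

lemma maxNatDegree_aeval [Fintype ι] [Fintype κ] {P : κ → MvPolynomial ι R}
    (hP : ∀ j, (P j).IsHomogeneous n)
    (hP₀ : ∀ c : ι → R, c ≠ 0 → (fun j ↦ MvPolynomial.eval c (P j)) ≠ 0) (hx : x ≠ 0) :
    maxNatDegree (fun j ↦ MvPolynomial.aeval x (P j)) = n * maxNatDegree x := by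
  refine maxNatDegree_eq (fun j ↦ natDegree_aeval_le_of_isHomogeneous (hP j)
    (natDegree_le_maxNatDegree x)) ?_
  simp only [coeff_aeval_of_isHomogeneous (hP _) (natDegree_le_maxNatDegree x)]
  exact hP₀ _ (coeff_maxNatDegree_ne_zero hx)

end HomogeneousForm

section RatFunc

variable {F ι : Type*} [Field F] [Fintype ι]

lemma IsUnimodular.maxNatDegree_eq_of_proportional {v w : ι → F[X]} (hv : IsUnimodular v)
    (hw : IsUnimodular w) {k : RatFunc F}
    (hvw : algebraMap F[X] (RatFunc F) ∘ v = k • (algebraMap F[X] (RatFunc F) ∘ w)) :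
    maxNatDegree v = maxNatDegree w := by
  have hmul (i) : v i * k.denom = k.num * w i := by
    apply RatFunc.algebraMap_injective F
    have hi : algebraMap F[X] (RatFunc F) (v i) = k * algebraMap F[X] (RatFunc F) (w i) :=
      congrFun hvw i
    have hdenom := RatFunc.algebraMap_ne_zero k.denom_ne_zero
    nth_rw 1 [map_mul, map_mul, hi, ← RatFunc.num_div_denom k]
    field_simp
  have hcop := RatFunc.isCoprime_num_denom k
  have hdenom : IsUnit k.denom := hw.isUnit_of_forall_dvd fun i ↦
    hcop.symm.dvd_of_dvd_mul_left (Dvd.intro_left _ (hmul i))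
  have hnum : IsUnit k.num := hv.isUnit_of_forall_dvd fun i ↦
    hcop.dvd_of_dvd_mul_right (Dvd.intro _ (hmul i).symm)
  have hdeg (i) : (v i).natDegree = (w i).natDegree := by
    have := congrArg natDegree (hmul i)
    obtain ⟨c, hc0, hc⟩ := Polynomial.isUnit_iff.mp hdenom
    obtain ⟨e, he0, he⟩ := Polynomial.isUnit_iff.mp hnum
    rwa [← hc, ← he, natDegree_mul_C hc0.ne_zero, natDegree_C_mul he0.ne_zero] at this
  simp only [maxNatDegree, hdeg]

/-- The degree of the point of `ℙ¹(F(t))` with homogeneous coordinates `v`, which is the largest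
degree of the entries of a proportional vector of coprime polynomials. The point at infinity
`v 1 = 0` gets the correct degree `0` from the convention `v 0 / 0 = 0`. -/
noncomputable def projDegree (v : Fin 2 → RatFunc F) : ℕ :=
  max (v 0 / v 1).num.natDegree (v 0 / v 1).denom.natDegree

lemma exists_isUnimodular_eq_smul {v : Fin 2 → RatFunc F} (hv : v ≠ 0) :
    ∃ w : Fin 2 → F[X], IsUnimodular w ∧ projDegree v = maxNatDegree w ∧
      ∃ k : RatFunc F, k ≠ 0 ∧ v = k • (algebraMap F[X] (RatFunc F) ∘ w) := by
  by_cases hv₁ : v 1 = 0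
  · have hv₀ : v 0 ≠ 0 := fun hv₀ ↦ hv (by ext i; fin_cases i <;> assumption)
    refine ⟨![1, 0], isUnimodular_pair.mpr isCoprime_one_left, ?_, v 0, hv₀, ?_⟩
    · simp [projDegree, hv₁, maxNatDegree_pair]
    · ext i
      fin_cases i <;> simp [hv₁]
  · have hdenom : algebraMap F[X] (RatFunc F) (v 0 / v 1).denom ≠ 0 :=
      RatFunc.algebraMap_ne_zero (RatFunc.denom_ne_zero _)
    refine ⟨![(v 0 / v 1).num, (v 0 / v 1).denom],
      isUnimodular_pair.mpr (RatFunc.isCoprime_num_denom _), ?_,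
      v 1 / algebraMap F[X] (RatFunc F) (v 0 / v 1).denom, div_ne_zero hv₁ hdenom, ?_⟩
    · simp [projDegree, maxNatDegree_pair]
    · ext i
      fin_cases i
      · have hquot := RatFunc.num_div_denom (v 0 / v 1)
        simp only [div_eq_div_iff hdenom hv₁] at hquot
        simp only [Fin.zero_eta, Pi.smul_apply, Function.comp_apply, Matrix.cons_val_zero,
          smul_eq_mul]
        rw [div_mul_eq_mul_div, eq_div_iff hdenom, mul_comm (v 1), hquot]
      · simp [hdenom]

lemma projDegree_smul_comp {w : Fin 2 → F[X]} (hw : IsUnimodular w) {k : RatFunc F} (hk : k ≠ 0) :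
    projDegree (k • (algebraMap F[X] (RatFunc F) ∘ w)) = maxNatDegree w := by
  have hv : k • (algebraMap F[X] (RatFunc F) ∘ w) ≠ 0 := by
    obtain ⟨i, hi⟩ := Function.ne_iff.mp hw.ne_zero
    exact Function.ne_iff.mpr ⟨i, mul_ne_zero hk (RatFunc.algebraMap_ne_zero hi)⟩
  obtain ⟨w', hw', hdeg, l, hl, h⟩ := exists_isUnimodular_eq_smul hv
  rw [hdeg]
  refine hw'.maxNatDegree_eq_of_proportional hw (k := k / l) ?_
  rw [div_eq_inv_mul, mul_smul, h, inv_smul_smul₀ hl]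

end RatFunc

section AddSubVec

variable {R S : Type*} [CommRing R] [CommRing S]

/-- The value at a vector of the map which takes `(x(P)x(Q) : x(P) + x(Q) : 1)` to
`(x(P + Q)x(P - Q) : x(P + Q) + x(P - Q) : 1)` for points `P`, `Q` of a Weierstrass curve. -/
noncomputable def addSubVec (W : WeierstrassCurve R) (v : Fin 3 → R) : Fin 3 → R :=
  fun i ↦ (addSubMap W i).eval v

lemma addSubVec_eq (W : WeierstrassCurve R) (v : Fin 3 → R) :
    addSubVec W v = ![v 0 ^ 2 - W.b₄ * v 0 * v 2 - W.b₆ * v 1 * v 2 - W.b₈ * v 2 ^ 2,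
      2 * v 1 * v 0 + W.b₂ * v 0 * v 2 + W.b₄ * v 1 * v 2 + W.b₆ * v 2 ^ 2,
      v 1 ^ 2 - 4 * v 0 * v 2] := by
  ext i
  fin_cases i <;> simp [addSubVec, addSubMap]

lemma addSubVec_smul (W : WeierstrassCurve R) (k : R) (v : Fin 3 → R) :
    addSubVec W (k • v) = k ^ 2 • addSubVec W v := by
  simp only [addSubVec_eq]
  ext i
  fin_cases i <;> simp <;> ring

lemma comp_addSubVec (φ : R →+* S) (W : WeierstrassCurve R) (v : Fin 3 → R) :
    φ ∘ addSubVec W v = addSubVec (W.map φ) (φ ∘ v) := by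
  ext i
  simp only [addSubVec_eq]
  fin_cases i <;> simp [map_ofNat φ]

lemma IsUnimodular.addSubVec (W : WeierstrassCurve R) [W.IsElliptic] {v : Fin 3 → R}
    (hv : IsUnimodular v) : IsUnimodular (addSubVec W v) := by
  rw [isUnimodular_iff_forall_isMaximal] at hv ⊢
  intro M hM
  let := Ideal.Quotient.field M
  rw [comp_addSubVec]
  exact addSubMap_ne_zero _ (hv M hM)

lemma maxNatDegree_addSubVec [IsReduced R] (W : WeierstrassCurve R) [W.IsElliptic]
    {v : Fin 3 → R[X]} (hv : v ≠ 0) :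
    maxNatDegree (addSubVec (W.map C) v) = 2 * maxNatDegree v := by
  rw [← maxNatDegree_aeval (isHomogeneous_addSubMap W) (fun _ ↦ addSubMap_ne_zero W) hv]
  congr 1
  ext1 i
  rw [addSubVec_eq]
  fin_cases i <;> simp [addSubMap, map_ofNat C]

end AddSubVec

section GroupLaw

open Affine Affine.Point

variable {K : Type*} [Field K] (W : WeierstrassCurve K)

lemma addSubVec_symProd_self (x : K) : addSubVec W (symProd ![x, 1] ![x, 1]) =
    ![x ^ 4 - W.b₄ * x ^ 2 - 2 * W.b₆ * x - W.b₈,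
      4 * x ^ 3 + W.b₂ * x ^ 2 + 2 * W.b₄ * x + W.b₆, 0] := by
  rw [addSubVec_eq]
  ext i
  fin_cases i <;> simp [symProd] <;> ring

lemma sub_negY_sq {x y : K} (h : W.toAffine.Equation x y) :
    (y - W.toAffine.negY x y) ^ 2 = 4 * x ^ 3 + W.b₂ * x ^ 2 + 2 * W.b₄ * x + W.b₆ := by
  simp only [negY, b₂, b₄, b₆]
  linear_combination 4 * (W.toAffine.equation_iff _ _).mp h

variable [DecidableEq K]

lemma addSubVec_of_X_ne {x₁ y₁ x₂ y₂ : K} (h₁ : W.toAffine.Equation x₁ y₁)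
    (h₂ : W.toAffine.Equation x₂ y₂) (hx : x₁ ≠ x₂) :
    addSubVec W (symProd ![x₁, 1] ![x₂, 1]) = (x₁ - x₂) ^ 2 •
      symProd ![W.toAffine.addX x₁ x₂ (W.toAffine.slope x₁ x₂ y₁ y₂), 1]
        ![W.toAffine.addX x₁ x₂ (W.toAffine.slope x₁ x₂ y₁ (W.toAffine.negY x₂ y₂)), 1] := by
  have hd : x₁ - x₂ ≠ 0 := sub_ne_zero.mpr hx
  have e₁ := (W.toAffine.equation_iff _ _).mp h₁
  have e₂ := (W.toAffine.equation_iff _ _).mp h₂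
  have hprod : (x₁ * x₂) ^ 2 - W.b₄ * (x₁ * x₂) - W.b₆ * (x₁ + x₂) - W.b₈ =
      (x₁ - x₂) ^ 2 * (W.toAffine.addX x₁ x₂ (W.toAffine.slope x₁ x₂ y₁ y₂) *
        W.toAffine.addX x₁ x₂ (W.toAffine.slope x₁ x₂ y₁ (W.toAffine.negY x₂ y₂))) := by
    rw [slope_of_X_ne hx, slope_of_X_ne hx]
    simp only [addX, negY, b₄, b₆, b₈]
    field_simp
    set f₁ := x₁ ^ 3 + W.a₂ * x₁ ^ 2 + W.a₄ * x₁ + W.a₆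
    set f₂ := x₂ ^ 3 + W.a₂ * x₂ ^ 2 + W.a₄ * x₂ + W.a₆
    set E₁ := y₁ ^ 2 + W.a₁ * x₁ * y₁ + W.a₃ * y₁ - f₁
    set E₂ := y₂ ^ 2 + W.a₁ * x₂ * y₂ + W.a₃ * y₂ - f₂
    set A := 2 * (f₁ + f₂ - (W.a₂ + x₁ + x₂) * (x₁ - x₂) ^ 2) + E₁ + E₂ +
      (W.a₁ * x₁ + W.a₃) * (W.a₁ * x₂ + W.a₃)
    linear_combination (-(A - (W.a₁ * x₂ + W.a₃) ^ 2 - 4 * f₂ - 4 * E₂)) * e₁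
      - (A - 4 * f₁ - (W.a₁ * x₁ + W.a₃) ^ 2) * e₂
  have hsum : 2 * (x₁ + x₂) * (x₁ * x₂) + W.b₂ * (x₁ * x₂) + W.b₄ * (x₁ + x₂) + W.b₆ =
      (x₁ - x₂) ^ 2 * (W.toAffine.addX x₁ x₂ (W.toAffine.slope x₁ x₂ y₁ y₂) +
        W.toAffine.addX x₁ x₂ (W.toAffine.slope x₁ x₂ y₁ (W.toAffine.negY x₂ y₂))) := by
    rw [slope_of_X_ne hx, slope_of_X_ne hx]
    simp only [addX, negY, b₂, b₄, b₆]
    field_simp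
    linear_combination (-2) * e₁ - 2 * e₂
  rw [addSubVec_eq]
  ext i
  fin_cases i
  · simpa [symProd] using hprod
  · simpa [symProd] using hsum
  · simp only [symProd, Fin.reduceFinMk, Matrix.cons_val, Pi.smul_apply, smul_eq_mul]
    ring

lemma addSubVec_self_of_Y_ne {x y : K} (h : W.toAffine.Equation x y)
    (hy : y ≠ W.toAffine.negY x y) : addSubVec W (symProd ![x, 1] ![x, 1]) =
      (y - W.toAffine.negY x y) ^ 2 •
        symProd ![W.toAffine.addX x x (W.toAffine.slope x x y y), 1] ![1, 0] := by
  have hψ : y - W.toAffine.negY x y ≠ 0 := sub_ne_zero.mpr hy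
  have hmulX : (y - W.toAffine.negY x y) ^ 2 * W.toAffine.addX x x (W.toAffine.slope x x y y) =
      x ^ 4 - W.b₄ * x ^ 2 - 2 * W.b₆ * x - W.b₈ := by
    have e := (W.toAffine.equation_iff _ _).mp h
    rw [slope_of_Y_ne rfl hy, addX]
    field_simp
    simp only [negY, b₄, b₆, b₈]
    linear_combination -(W.a₁ ^ 2 + 4 * W.a₂ + 8 * x) * e
  rw [addSubVec_symProd_self, ← sub_negY_sq W h, ← hmulX]
  ext i
  fin_cases i <;> simp [symProd]

lemma exists_addSubVec_sym2x_self [W.IsElliptic] (P : W.toAffine.Point) :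
    ∃ k : K, k ≠ 0 ∧ addSubVec W (P.sym2x P) = k • (P + P).sym2x 0 := by
  match P with
  | 0 =>
    refine ⟨1, one_ne_zero, ?_⟩
    rw [addSubVec_eq]
    ext i
    fin_cases i <;> simp
  | .some x y h =>
    by_cases hy : y = W.toAffine.negY x y
    · have hv := addSubVec_symProd_self W x
      rw [← sub_negY_sq W h.1, sub_eq_zero.mpr hy, zero_pow two_ne_zero] at hv
      have hne : addSubVec W (symProd ![x, 1] ![x, 1]) ≠ 0 :=
        addSubMap_ne_zero W (sym2x_ne_zero (.some x y h) (.some x y h))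
      refine ⟨x ^ 4 - W.b₄ * x ^ 2 - 2 * W.b₆ * x - W.b₈, fun hk ↦ hne ?_, ?_⟩
      · rw [hv, hk]
        ext i
        fin_cases i <;> rfl
      · rw [add_self_of_Y_eq hy, sym2x_zero_zero]
        exact hv.trans (by simp)
    · rw [add_self_of_Y_ne hy]
      exact ⟨_, pow_ne_zero 2 (sub_ne_zero.mpr hy), addSubVec_self_of_Y_ne W h.1 hy⟩

lemma exists_addSubVec_sym2x [W.IsElliptic] (P Q : W.toAffine.Point) :
    ∃ k : K, k ≠ 0 ∧ addSubVec W (P.sym2x Q) = k • (P + Q).sym2x (P - Q) := by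
  by_cases hPQ : P = Q
  · subst hPQ
    simpa using exists_addSubVec_sym2x_self W P
  by_cases hPQ' : P = -Q
  · subst hPQ'
    obtain ⟨k, hk, h⟩ := exists_addSubVec_sym2x_self W Q
    refine ⟨k, hk, ?_⟩
    rw [sym2x_neg_left, h, neg_add_cancel, ← neg_add', sym2x_neg_right, sym2x_comm]
  match P, Q with
  | 0, 0 => exact absurd rfl hPQ
  | 0, .some x y h =>
    refine ⟨1, one_ne_zero, ?_⟩
    rw [zero_add, zero_sub, sym2x_neg_right, addSubVec_eq]
    ext i
    fin_cases i <;> simp <;> ring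
  | .some x y h, 0 =>
    refine ⟨1, one_ne_zero, ?_⟩
    rw [add_zero, sub_zero, addSubVec_eq]
    ext i
    fin_cases i <;> simp <;> ring
  | .some x₁ y₁ h₁, .some x₂ y₂ h₂ =>
    have hx : x₁ ≠ x₂ := fun hx ↦ (X_eq_iff.mp hx).elim hPQ hPQ'
    rw [sub_eq_add_neg (Affine.Point.some _ _ _), neg_some, add_of_X_ne hx, add_of_X_ne hx]
    exact ⟨_, pow_ne_zero 2 (sub_ne_zero.mpr hx), addSubVec_of_X_ne W h₁.1 h₂.1 hx⟩

end GroupLaw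

section QuadraticTwist

variable {R : Type*} [CommRing R] (W : WeierstrassCurve R) (d : R)

/-- The quadratic twist `y² = x³ + d a₂ x² + d² a₄ x + d³ a₆` by `d` of a curve
`y² = x³ + a₂ x² + a₄ x + a₆`. -/
def quadraticTwist : WeierstrassCurve R :=
  ⟨0, d * W.a₂, 0, d ^ 2 * W.a₄, d ^ 3 * W.a₆⟩

variable [W.IsCharNeTwoNF]

lemma quadraticTwist_Δ : (quadraticTwist W d).Δ = d ^ 6 * W.Δ := by
  simp only [quadraticTwist, Δ, b₂, b₄, b₆, b₈, a₁_of_isCharNeTwoNF, a₃_of_isCharNeTwoNF]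
  ring

lemma isElliptic_quadraticTwist [W.IsElliptic] (hd : IsUnit d) :
    (quadraticTwist W d).IsElliptic :=
  ⟨by simpa only [quadraticTwist_Δ] using (hd.pow 6).mul W.isUnit_Δ⟩

lemma addSubVec_quadraticTwist (v : Fin 3 → R) :
    addSubVec (quadraticTwist W d) ![d ^ 2 * v 0, d * v 1, v 2] =
      d ^ 2 • ![d ^ 2 * addSubVec W v 0, d * addSubVec W v 1, addSubVec W v 2] := by
  simp only [addSubVec_eq]
  ext i
  fin_cases i <;> simp [quadraticTwist, b₂, b₄, b₆, b₈] <;> ring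

end QuadraticTwist

section UntwistedX

variable {K : Type*} [Field K] {W : WeierstrassCurve K} {d : K}

/-- Homogeneous coordinates of `x(P) / d`, for a point `P` on the quadratic twist by `d`. Over a
field in which `d` is a square this is the `x`-coordinate of the corresponding point of `W`. -/
noncomputable def untwistedX (P : (quadraticTwist W d).toAffine.Point) : Fin 2 → K :=
  ![P.xRep 0 / d, P.xRep 1]

lemma untwistedX_some {x y : K} (h : (quadraticTwist W d).toAffine.Nonsingular x y) :
    untwistedX (.some x y h) = ![x / d, 1] :=
  rfl

lemma untwistedX_ne_zero (hd : d ≠ 0) (P : (quadraticTwist W d).toAffine.Point) :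
    untwistedX P ≠ 0 := by
  contrapose! hd
  have h₀ : P.xRep 0 / d = 0 := congrFun hd 0
  have h₁ : P.xRep 1 = 0 := congrFun hd 1
  by_contra hd'
  refine P.xRep_ne_zero ?_
  ext i
  fin_cases i
  · simpa [hd'] using h₀
  · exact h₁

lemma sym2x_eq_untwistedX (hd : d ≠ 0) (P Q : (quadraticTwist W d).toAffine.Point) :
    P.sym2x Q = ![d ^ 2 * symProd (untwistedX P) (untwistedX Q) 0,
      d * symProd (untwistedX P) (untwistedX Q) 1, symProd (untwistedX P) (untwistedX Q) 2] := by
  ext i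
  fin_cases i <;> simp [Affine.Point.sym2x, symProd, untwistedX] <;> field_simp

lemma exists_addSubVec_untwistedX [DecidableEq K] [W.IsCharNeTwoNF] [W.IsElliptic] (hd : d ≠ 0)
    (P Q : (quadraticTwist W d).toAffine.Point) :
    ∃ k : K, addSubVec W (symProd (untwistedX P) (untwistedX Q)) =
      k • symProd (untwistedX (P + Q)) (untwistedX (P - Q)) := by
  have := isElliptic_quadraticTwist W d hd.isUnit
  obtain ⟨k, -, h⟩ := exists_addSubVec_sym2x _ P Q
  rw [sym2x_eq_untwistedX hd, sym2x_eq_untwistedX hd, addSubVec_quadraticTwist] at h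
  refine ⟨k / d ^ 2, ?_⟩
  have h₀ := congrFun h 0
  have h₁ := congrFun h 1
  have h₂ := congrFun h 2
  simp only [Pi.smul_apply, smul_eq_mul, Matrix.cons_val] at h₀ h₁ h₂
  funext i
  rw [Pi.smul_apply, smul_eq_mul, div_mul_eq_mul_div, eq_div_iff (pow_ne_zero 2 hd)]
  match i with
  | 0 => exact mul_left_cancel₀ (pow_ne_zero 2 hd) (by linear_combination h₀)
  | 1 => exact mul_left_cancel₀ hd (by linear_combination h₁)
  | 2 => linear_combination h₂

end UntwistedX

section Height

variable {F : Type*} [Field F] (E : WeierstrassCurve F) [E.IsElliptic]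

lemma projDegree_add_projDegree {p q r s : Fin 2 → RatFunc F} (hp : p ≠ 0) (hq : q ≠ 0)
    (hr : r ≠ 0) (hs : s ≠ 0) {k : RatFunc F}
    (h : addSubVec (E.map (algebraMap F (RatFunc F))) (symProd p q) = k • symProd r s) :
    projDegree r + projDegree s = 2 * (projDegree p + projDegree q) := by
  obtain ⟨p, hp', hp_deg, kp, hkp, rfl⟩ := exists_isUnimodular_eq_smul hp
  obtain ⟨q, hq', hq_deg, kq, hkq, rfl⟩ := exists_isUnimodular_eq_smul hq
  obtain ⟨r, hr', hr_deg, kr, -, rfl⟩ := exists_isUnimodular_eq_smul hr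
  obtain ⟨s, hs', hs_deg, ks, -, rfl⟩ := exists_isUnimodular_eq_smul hs
  have hmap : E.map (algebraMap F (RatFunc F)) = (E.map C).map (algebraMap F[X] (RatFunc F)) := by
    rw [WeierstrassCurve.map_map, IsScalarTower.algebraMap_eq F F[X] (RatFunc F), algebraMap_eq]
  have hkpq : (kp * kq) ^ 2 ≠ 0 := pow_ne_zero 2 (mul_ne_zero hkp hkq)
  rw [smul_symProd_smul, smul_symProd_smul, addSubVec_smul, ← comp_symProd, ← comp_symProd, hmap,
    ← comp_addSubVec, smul_smul, ← eq_inv_smul_iff₀ hkpq, smul_smul] at h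
  rw [hp_deg, hq_deg, hr_deg, hs_deg, ← maxNatDegree_symProd hr'.ne_zero hs'.ne_zero,
    ← maxNatDegree_symProd hp'.ne_zero hq'.ne_zero,
    ← maxNatDegree_addSubVec E (hp'.symProd hq').ne_zero]
  exact (((hp'.symProd hq').addSubVec (E.map C)).maxNatDegree_eq_of_proportional
    (hr'.symProd hs') h).symm

/-- The degree of the rational function `x(P) / d`, for a point `P` on the quadratic twist by `d`
of a curve with constant coefficients. -/
noncomputable def xHeight {E : WeierstrassCurve F} {d : RatFunc F}
    (P : (quadraticTwist (E.map (algebraMap F (RatFunc F))) d).toAffine.Point) : ℕ :=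
  projDegree (untwistedX P)

theorem xHeight_add_add_xHeight_sub [DecidableEq (RatFunc F)] [E.IsCharNeTwoNF] {d : RatFunc F}
    (hd : d ≠ 0) (P Q : (quadraticTwist (E.map (algebraMap F (RatFunc F))) d).toAffine.Point) :
    xHeight (P + Q) + xHeight (P - Q) = 2 * (xHeight P + xHeight Q) := by
  have : (E.map (algebraMap F (RatFunc F))).IsCharNeTwoNF := ⟨by simp, by simp⟩
  obtain ⟨k, h⟩ := exists_addSubVec_untwistedX hd P Q
  exact projDegree_add_projDegree E (untwistedX_ne_zero hd _) (untwistedX_ne_zero hd _)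
    (untwistedX_ne_zero hd _) (untwistedX_ne_zero hd _) h

end Height

section CharFiber

variable {F : Type*} [Field F]

lemma isCoprime_prod_X_sub_C {f : F[X]} {s : Finset F} (h : ∀ c ∈ s, f.eval c ≠ 0) :
    IsCoprime f (∏ c ∈ s, (X - C c)) :=
  IsCoprime.prod_right fun c hc ↦ ((irreducible_X_sub_C c).coprime_iff_not_dvd.mpr
    fun hd ↦ h c hc (dvd_iff_isRoot.mp hd)).symm

lemma prod_X_sub_C_dvd {f : F[X]} {s : Finset F} (h : ∀ c ∈ s, f.eval c = 0) :
    ∏ c ∈ s, (X - C c) ∣ f :=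
  Finset.prod_dvd_of_coprime
    (fun _ _ _ _ hne ↦ pairwise_coprime_X_sub_C Function.injective_id hne)
    fun c hc ↦ dvd_iff_isRoot.mpr (h c hc)

lemma prod_univ_X_sub_C [Fintype F] : ∏ c : F, (X - C c) = X ^ Fintype.card F - X := by
  have hq : 1 < Fintype.card F := Fintype.one_lt_card
  have hroots : Multiset.card (X ^ Fintype.card F - X : F[X]).roots =
      (X ^ Fintype.card F - X : F[X]).natDegree := by
    rw [FiniteField.roots_X_pow_card_sub_X, FiniteField.X_pow_card_sub_X_natDegree_eq F hq]
    rfl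
  have hmonic : (X ^ Fintype.card F - X : F[X]).Monic :=
    monic_X_pow_sub (by rw [degree_X]; exact_mod_cast hq)
  rw [← prod_multiset_X_sub_C_of_monic_of_roots_card_eq hmonic hroots,
    FiniteField.roots_X_pow_card_sub_X]
  rfl

variable [Fintype F] [DecidableEq F] (f : F[X])

/-- The elements at which `f` takes a value of quadratic character `e`. -/
def charFiber (e : ℤ) : Finset F :=
  Finset.univ.filter fun c ↦ quadraticChar F (f.eval c) = e

lemma prod_charFiber {M : Type*} [CommMonoid M] (g : F → M) :
    (∏ c ∈ charFiber f 1, g c) * (∏ c ∈ charFiber f 0, g c) * ∏ c ∈ charFiber f (-1), g c =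
      ∏ c, g c := by
  simp only [charFiber, Finset.prod_filter, ← Finset.prod_mul_distrib]
  refine Finset.prod_congr rfl fun c _ ↦ ?_
  by_cases h : f.eval c = 0
  · simp [h]
  · rcases quadraticChar_dichotomy h with h | h <;> simp [h]

lemma card_charFiber : (charFiber f 1).card + (charFiber f 0).card + (charFiber f (-1)).card =
    Fintype.card F := by
  simpa [← ofAdd_nsmul, ← ofAdd_add, Finset.card_univ] using
    prod_charFiber f fun _ ↦ Multiplicative.ofAdd (1 : ℕ)

lemma card_sqrts_eq (hF : ringChar F ≠ 2) (c : F) :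
    (Finset.univ.filter fun y : F ↦ y ^ 2 = c).card =
      2 * (if quadraticChar F c = 1 then 1 else 0) + if quadraticChar F c = 0 then 1 else 0 := by
  have hset : (Finset.univ.filter fun y : F ↦ y ^ 2 = c) = {y : F | y ^ 2 = c}.toFinset := by
    ext
    simp
  zify
  rw [hset, quadraticChar_card_sqrts hF]
  by_cases h : c = 0
  · simp [h]
  · rcases quadraticChar_dichotomy h with h | h <;> simp [h]

lemma card_filter_sq_eq_eval (hF : ringChar F ≠ 2) :
    (Finset.univ.filter fun P : F × F ↦ P.2 ^ 2 = f.eval P.1).card =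
      2 * (charFiber f 1).card + (charFiber f 0).card := by
  calc (Finset.univ.filter fun P : F × F ↦ P.2 ^ 2 = f.eval P.1).card
      = ∑ c : F, (Finset.univ.filter fun y : F ↦ y ^ 2 = f.eval c).card := by
        simp only [Finset.card_filter]
        rw [Fintype.sum_prod_type]
    _ = 2 * (charFiber f 1).card + (charFiber f 0).card := by
        simp only [card_sqrts_eq hF, Finset.sum_add_distrib, ← Finset.mul_sum, charFiber,
          Finset.card_filter]

variable {f}

lemma quadraticChar_eval_of_mem_charFiber {e : ℤ} {c : F} (hc : c ∈ charFiber f e) :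
    quadraticChar F (f.eval c) = e :=
  (Finset.mem_filter.mp hc).2

lemma eval_pow_card_half_add_one {e : ℤ} (hF : ringChar F ≠ 2) {c : F} (hc : c ∈ charFiber f e) :
    (f ^ (Fintype.card F / 2) + 1).eval c = e + 1 := by
  rw [eval_add, eval_pow, eval_one, ← quadraticChar_eq_pow_of_char_ne_two' hF,
    quadraticChar_eval_of_mem_charFiber hc]

variable (f)

/-- The monic polynomial with simple roots exactly at the elements of `charFiber f e`. -/
noncomputable def charFactor (e : ℤ) : F[X] := ∏ c ∈ charFiber f e, (X - C c)

lemma natDegree_charFactor (e : ℤ) : (charFactor f e).natDegree = (charFiber f e).card :=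
  natDegree_finsetProd_X_sub_C_eq_card _ _

lemma charFactor_ne_zero (e : ℤ) : charFactor f e ≠ 0 := (monic_prod_X_sub_C _ _).ne_zero

lemma charFactor_mul_charFactor :
    charFactor f 1 * charFactor f 0 * charFactor f (-1) = X ^ Fintype.card F - X :=
  (prod_charFiber f fun c ↦ X - C c).trans prod_univ_X_sub_C

lemma charFactor_zero_dvd : charFactor f 0 ∣ f :=
  prod_X_sub_C_dvd fun _ hc ↦
    quadraticChar_eq_zero_iff.mp (quadraticChar_eval_of_mem_charFiber hc)

lemma isCoprime_charFactor {e : ℤ} (he : e ≠ 0) : IsCoprime f (charFactor f e) :=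
  isCoprime_prod_X_sub_C fun c hc h ↦ he <| by
    rw [← quadraticChar_eval_of_mem_charFiber hc, h, quadraticChar_zero]

lemma charFactor_neg_one_dvd (hF : ringChar F ≠ 2) :
    charFactor f (-1) ∣ f ^ (Fintype.card F / 2) + 1 :=
  prod_X_sub_C_dvd fun c hc ↦ by simp [eval_pow_card_half_add_one hF hc]

lemma isCoprime_pow_card_half_add_one_charFactor (hF : ringChar F ≠ 2) {e : ℤ}
    (he : (e : F) + 1 ≠ 0) : IsCoprime (f ^ (Fintype.card F / 2) + 1) (charFactor f e) :=
  isCoprime_prod_X_sub_C fun c hc ↦ by rwa [eval_pow_card_half_add_one hF hc]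

variable {f}

/- The common factor `charFactor f 0 * charFactor f (-1) ^ 2` collects the roots of `f` once and the
common roots of `f ^ (q / 2) + 1` and `X ^ q - X` twice. -/
theorem exists_isCoprime_eq_charFactor_mul (hF : ringChar F ≠ 2) (hf : f.Separable) (g : F[X]) :
    ∃ u, IsCoprime u (charFactor f 1 ^ 2 * charFactor f 0) ∧
      f * (f ^ (Fintype.card F / 2) + 1) ^ 2 - g * (X ^ Fintype.card F - X) ^ 2 =
        charFactor f 0 * charFactor f (-1) ^ 2 * u := by
  have h2 : (1 : F) + 1 ≠ 0 := by
    rw [one_add_one_eq_two]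
    exact Ring.two_ne_zero hF
  obtain ⟨l, hl⟩ := charFactor_zero_dvd f
  obtain ⟨m, hm⟩ := charFactor_neg_one_dvd f hF
  have hl₀ : IsCoprime l (charFactor f 0) := (hl ▸ hf :).isCoprime.symm
  have hl₁ : IsCoprime l (charFactor f 1) :=
    (isCoprime_charFactor f one_ne_zero).of_isCoprime_of_dvd_left (Dvd.intro_left _ hl.symm)
  have hm₀ : IsCoprime m (charFactor f 0) :=
    (isCoprime_pow_card_half_add_one_charFactor f hF (by simp)).of_isCoprime_of_dvd_left
      (Dvd.intro_left _ hm.symm)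
  have hm₁ : IsCoprime m (charFactor f 1) :=
    (isCoprime_pow_card_half_add_one_charFactor f hF (by simpa using h2)).of_isCoprime_of_dvd_left
      (Dvd.intro_left _ hm.symm)
  refine ⟨l * m ^ 2 + -g * (charFactor f 1 ^ 2 * charFactor f 0), ?_, ?_⟩
  · exact ((hl₁.mul_left hm₁.pow_left).pow_right.mul_right
      (hl₀.mul_left hm₀.pow_left)).add_mul_right_left _
  · rw [← charFactor_mul_charFactor f, hm]
    linear_combination (charFactor f (-1) * m) ^ 2 * hl

end CharFiber

section CubicPolynomial

variable {R : Type*} [CommRing R]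

/-- The polynomial `X³ + a₂ X² + a₄ X + a₆` whose values are the squares `y²` on a curve with
`a₁ = a₃ = 0`. -/
noncomputable def cubicPolynomial (W : WeierstrassCurve R) : R[X] :=
  X ^ 3 + C W.a₂ * X ^ 2 + C W.a₄ * X + C W.a₆

lemma eval_cubicPolynomial (W : WeierstrassCurve R) (x : R) :
    (cubicPolynomial W).eval x = x ^ 3 + W.a₂ * x ^ 2 + W.a₄ * x + W.a₆ := by
  simp [cubicPolynomial]

lemma natDegree_cubicPolynomial [Nontrivial R] (W : WeierstrassCurve R) :
    (cubicPolynomial W).natDegree = 3 := by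
  unfold cubicPolynomial
  compute_degree!

lemma cubicPolynomial_ne_zero [Nontrivial R] (W : WeierstrassCurve R) :
    cubicPolynomial W ≠ 0 :=
  ne_zero_of_natDegree_gt (n := 0) (by rw [natDegree_cubicPolynomial]; norm_num)

lemma cubicPolynomial_map {S : Type*} [CommRing S] (W : WeierstrassCurve R) (φ : R →+* S) :
    cubicPolynomial (W.map φ) = (cubicPolynomial W).map φ := by
  simp [cubicPolynomial]

lemma equation_iff_sq_eq_eval (W : WeierstrassCurve R) [W.IsCharNeTwoNF] (x y : R) :
    W.toAffine.Equation x y ↔ y ^ 2 = (cubicPolynomial W).eval x := by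
  simp [Affine.equation_iff, eval_cubicPolynomial]

variable {F : Type*} [Field F] (E : WeierstrassCurve F)

lemma eval_derivative_cubicPolynomial_ne_zero [E.IsCharNeTwoNF] [E.IsElliptic] {x : F}
    (hx : (cubicPolynomial E).eval x = 0) : (derivative (cubicPolynomial E)).eval x ≠ 0 := by
  have h : E.toAffine.Nonsingular x 0 :=
    Affine.equation_iff_nonsingular.mp <|
      (equation_iff_sq_eq_eval E x 0).mpr <| by rw [hx, zero_pow two_ne_zero]
  have hderiv : (derivative (cubicPolynomial E)).eval x = 3 * x ^ 2 + 2 * E.a₂ * x + E.a₄ := by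
    simp only [cubicPolynomial, derivative_add, derivative_X_pow, derivative_C_mul,
      derivative_X, derivative_C, eval_add, eval_mul, eval_pow, eval_X, eval_C, eval_one, eval_zero,
      Nat.reduceSub, Nat.cast_ofNat]
    ring
  rw [hderiv]
  intro h₀
  obtain ⟨-, hX | hY⟩ := (Affine.nonsingular_iff' _ _).mp h
  · exact hX (by linear_combination -h₀)
  · exact hY (by simp)

lemma separable_cubicPolynomial [E.IsCharNeTwoNF] [E.IsElliptic] :
    (cubicPolynomial E).Separable := by
  refine (isCoprime_iff_aeval_ne_zero_of_isAlgClosed F (AlgebraicClosure F) _ _).mpr fun x ↦ ?_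
  have : (E.map (algebraMap F (AlgebraicClosure F))).IsCharNeTwoNF := ⟨by simp, by simp⟩
  have h := eval_derivative_cubicPolynomial_ne_zero (E.map (algebraMap F (AlgebraicClosure F)))
    (x := x)
  rw [cubicPolynomial_map, derivative_map, eval_map_algebraMap, eval_map_algebraMap] at h
  exact or_iff_not_imp_left.mpr fun hx ↦ h (not_not.mp hx)

variable [Fintype F]

lemma cubicPolynomial_comp_X_pow_card :
    (cubicPolynomial E).comp (X ^ Fintype.card F) = cubicPolynomial E ^ Fintype.card F :=
  FiniteField.expand_card (cubicPolynomial E)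

lemma natDegree_frobenius_sub_numerator (hq : Odd (Fintype.card F)) :
    (cubicPolynomial E * (cubicPolynomial E ^ (Fintype.card F / 2) + 1) ^ 2 -
      (C E.a₂ + X ^ Fintype.card F + X) * (X ^ Fintype.card F - X) ^ 2).natDegree =
      2 * Fintype.card F + 1 := by
  have hq1 : 1 < Fintype.card F := Fintype.one_lt_card
  have hpow := cubicPolynomial_comp_X_pow_card E
  generalize Fintype.card F = q at *
  obtain ⟨m, rfl⟩ := hq
  rw [Nat.mul_add_div two_pos, Nat.div_eq_of_lt one_lt_two, add_zero]
  have hexpand : cubicPolynomial E * (cubicPolynomial E ^ m + 1) ^ 2 -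
      (C E.a₂ + X ^ (2 * m + 1) + X) * (X ^ (2 * m + 1) - X) ^ 2 = X ^ (2 * (2 * m + 1) + 1) +
      ((X ^ (2 * m + 3) + 2 * C E.a₂ * X ^ (2 * m + 2) + C E.a₄ * X ^ (2 * m + 1) - X ^ 3 -
        C E.a₂ * X ^ 2 + C E.a₆) + 2 * cubicPolynomial E ^ (m + 1) + cubicPolynomial E) := by
    simp only [cubicPolynomial, add_comp, mul_comp, pow_comp, X_comp, C_comp] at hpow ⊢
    linear_combination -hpow
  rw [hexpand, natDegree_add_eq_left_of_natDegree_lt, natDegree_X_pow]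
  rw [natDegree_X_pow, Nat.lt_succ_iff]
  have hmid : (2 * cubicPolynomial E ^ (m + 1)).natDegree ≤ 2 * (2 * m + 1) := by
    refine natDegree_mul_le.trans ?_
    rw [natDegree_ofNat, natDegree_pow, natDegree_cubicPolynomial]
    omega
  have hlow : (cubicPolynomial E).natDegree ≤ 2 * (2 * m + 1) := by
    rw [natDegree_cubicPolynomial]
    omega
  refine natDegree_add_le_of_degree_le (natDegree_add_le_of_degree_le ?_ hmid) hlow
  compute_degree
  all_goals omega

variable [E.IsCharNeTwoNF] [E.IsElliptic]

lemma card_point_eq_card_filter_add_one [DecidableEq F] :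
    Nat.card E.toAffine.Point = (Finset.univ.filter fun P : F × F ↦
      P.2 ^ 2 = (cubicPolynomial E).eval P.1).card + 1 := by
  rw [← Fintype.card_subtype, ← Nat.card_eq_fintype_card,
    Nat.card_congr (Affine.pointEquiv E.toAffine)]
  simp only [equation_iff_sq_eq_eval]
  exact Finite.card_option

theorem exists_isCoprime_natDegree_eq_card_point (hF : ringChar F ≠ 2) :
    ∃ u v w : F[X], IsCoprime u v ∧ w ≠ 0 ∧
      cubicPolynomial E * (cubicPolynomial E ^ (Fintype.card F / 2) + 1) ^ 2 -
        (C E.a₂ + X ^ Fintype.card F + X) * (X ^ Fintype.card F - X) ^ 2 = w * u ∧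
      (X ^ Fintype.card F - X) ^ 2 = w * v ∧
      max u.natDegree v.natDegree = Nat.card E.toAffine.Point := by
  classical
  set f := cubicPolynomial E with hf
  have h₀ := charFactor_ne_zero f 0
  have h₁ := pow_ne_zero 2 (charFactor_ne_zero f 1)
  have h₂ := pow_ne_zero 2 (charFactor_ne_zero f (-1))
  obtain ⟨u, huv, hu⟩ := exists_isCoprime_eq_charFactor_mul hF (separable_cubicPolynomial E)
    (C E.a₂ + X ^ Fintype.card F + X)
  refine ⟨u, _, _, huv, mul_ne_zero h₀ h₂, hu, ?_, ?_⟩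
  · rw [← charFactor_mul_charFactor f]
    ring
  · have hdeg := natDegree_frobenius_sub_numerator E
      (Nat.odd_iff.mpr (FiniteField.odd_card_of_char_ne_two hF))
    have hcard := card_charFiber f
    have hu₀ : u ≠ 0 := by
      rintro rfl
      simp [hu] at hdeg
    rw [hu, ← hf, natDegree_mul (mul_ne_zero h₀ h₂) hu₀, natDegree_mul h₀ h₂, natDegree_pow,
      natDegree_charFactor, natDegree_charFactor] at hdeg
    rw [card_point_eq_card_filter_add_one, card_filter_sq_eq_eval _ hF, ← hf,
      natDegree_mul h₁ h₀, natDegree_pow, natDegree_charFactor, natDegree_charFactor]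
    omega

end CubicPolynomial

section GenericTwist

variable {F : Type*} [Field F] (E : WeierstrassCurve F)

/-- The twist of `E` over the field of rational functions by its own cubic polynomial `f`. After
adjoining `√f` it becomes `E` over the function field of `E`, with `(X, √f)` as generic point. -/
noncomputable abbrev genericTwist : WeierstrassCurve (RatFunc F) :=
  quadraticTwist (E.map (algebraMap F (RatFunc F)))
    (algebraMap F[X] (RatFunc F) (cubicPolynomial E))

variable {E}

lemma equation_genericTwist {s r : F[X]}
    (h : cubicPolynomial E * r ^ 2 = (cubicPolynomial E).comp s) :
    (genericTwist E).toAffine.Equation (algebraMap F[X] (RatFunc F) (cubicPolynomial E * s))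
      (algebraMap F[X] (RatFunc F) (cubicPolynomial E ^ 2 * r)) := by
  have hcomp : (cubicPolynomial E).comp s = s ^ 3 + C E.a₂ * s ^ 2 + C E.a₄ * s + C E.a₆ := by
    simp [cubicPolynomial]
  have h' := congrArg (algebraMap F[X] (RatFunc F)) (h.trans hcomp)
  simp only [map_mul, map_pow, map_add, RatFunc.algebraMap_C] at h'
  rw [Affine.equation_iff]
  simp only [quadraticTwist, map_a₂, map_a₄, map_a₆, map_mul, map_pow, RatFunc.algebraMap_eq_C]
  linear_combination algebraMap F[X] (RatFunc F) (cubicPolynomial E) ^ 3 * h'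

lemma xHeight_some {x y : RatFunc F} (hP : (genericTwist E).toAffine.Nonsingular x y)
    {u v : F[X]} (huv : IsCoprime u v) (hv : v ≠ 0)
    (hx : x * algebraMap F[X] (RatFunc F) v =
      algebraMap F[X] (RatFunc F) (cubicPolynomial E) * algebraMap F[X] (RatFunc F) u) :
    xHeight (.some x y hP : (genericTwist E).toAffine.Point) =
      max u.natDegree v.natDegree := by
  have hf := RatFunc.algebraMap_ne_zero (cubicPolynomial_ne_zero E)
  have hv' := RatFunc.algebraMap_ne_zero hv
  have hrep : untwistedX (.some x y hP : (genericTwist E).toAffine.Point) =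
      (algebraMap F[X] (RatFunc F) v)⁻¹ • (algebraMap F[X] (RatFunc F) ∘ ![u, v]) := by
    have hxuv : x / algebraMap F[X] (RatFunc F) (cubicPolynomial E) =
        (algebraMap F[X] (RatFunc F) v)⁻¹ * algebraMap F[X] (RatFunc F) u := by
      field_simp
      exact hx
    rw [untwistedX_some, hxuv]
    ext i
    fin_cases i <;> simp [hv']
  rw [xHeight, hrep, projDegree_smul_comp (isUnimodular_pair.mpr huv) (inv_ne_zero hv'),
    maxNatDegree_pair]

variable [E.IsCharNeTwoNF] [E.IsElliptic]

instance isElliptic_genericTwist : (genericTwist E).IsElliptic :=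
  have : (E.map (algebraMap F (RatFunc F))).IsCharNeTwoNF := ⟨by simp, by simp⟩
  isElliptic_quadraticTwist _ _ (RatFunc.algebraMap_ne_zero (cubicPolynomial_ne_zero E)).isUnit

/-- The point `(f s, f² r)` of the twist of `E` by its cubic polynomial `f`, corresponding to the
point `(s, r √f)` of `E`. -/
noncomputable def genericTwistPoint (s r : F[X])
    (h : cubicPolynomial E * r ^ 2 = (cubicPolynomial E).comp s) :
    (genericTwist E).toAffine.Point :=
  .some _ _ (Affine.equation_iff_nonsingular.mp (equation_genericTwist h))

variable {s r s' r' : F[X]} (h : cubicPolynomial E * r ^ 2 = (cubicPolynomial E).comp s)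
  (h' : cubicPolynomial E * r' ^ 2 = (cubicPolynomial E).comp s')

lemma xHeight_genericTwistPoint : xHeight (genericTwistPoint s r h) = s.natDegree := by
  unfold genericTwistPoint
  rw [xHeight_some _ (u := s) isCoprime_one_right one_ne_zero
    (by rw [map_one, mul_one, map_mul]),
    natDegree_one, Nat.max_zero]

lemma xHeight_genericTwistPoint_sub [DecidableEq (RatFunc F)] (hne : s ≠ s') {u v w : F[X]}
    (huv : IsCoprime u v) (hw : w ≠ 0)
    (hu : cubicPolynomial E * (r + r') ^ 2 - (C E.a₂ + s + s') * (s - s') ^ 2 = w * u)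
    (hv : (s - s') ^ 2 = w * v) :
    xHeight (genericTwistPoint s r h - genericTwistPoint s' r' h') =
      max u.natDegree v.natDegree := by
  have hf := RatFunc.algebraMap_ne_zero (cubicPolynomial_ne_zero E)
  have hs : algebraMap F[X] (RatFunc F) s - algebraMap F[X] (RatFunc F) s' ≠ 0 :=
    sub_ne_zero.mpr ((RatFunc.algebraMap_injective F).ne hne)
  have hX : algebraMap F[X] (RatFunc F) (cubicPolynomial E * s) ≠
      algebraMap F[X] (RatFunc F) (cubicPolynomial E * s') :=
    (RatFunc.algebraMap_injective F).ne ((mul_right_injective₀ (cubicPolynomial_ne_zero E)).ne hne)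
  have hv₀ : v ≠ 0 := by
    rintro rfl
    exact pow_ne_zero 2 (sub_ne_zero.mpr hne) (by rw [hv, mul_zero])
  unfold genericTwistPoint
  rw [sub_eq_add_neg, Affine.Point.neg_some, Affine.Point.add_of_X_ne hX]
  refine xHeight_some _ huv hv₀ (mul_left_cancel₀ (RatFunc.algebraMap_ne_zero hw) ?_)
  have hu' := congrArg (algebraMap F[X] (RatFunc F)) hu
  have hv' := congrArg (algebraMap F[X] (RatFunc F)) hv
  simp only [map_mul, map_pow, map_add, map_sub, RatFunc.algebraMap_C] at hu' hv'
  rw [mul_left_comm, ← hv', mul_left_comm, ← hu', Affine.slope_of_X_ne hX]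
  simp only [Affine.addX, Affine.negY, quadraticTwist, map_a₂, map_mul, map_pow,
    RatFunc.algebraMap_eq_C, ← mul_sub]
  field_simp
  ring

end GenericTwist

section SecondDifference

lemma eq_quadratic_of_second_difference {d : ℤ → ℤ}
    (h : ∀ n, d (n + 1) + d (n - 1) = 2 * d n + 2) (n : ℤ) :
    d n = n ^ 2 + (d 0 + 1 - d (-1)) * n + d 0 := by
  suffices d n = n ^ 2 + (d 0 + 1 - d (-1)) * n + d 0 ∧
      d (n - 1) = (n - 1) ^ 2 + (d 0 + 1 - d (-1)) * (n - 1) + d 0 from this.1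
  induction n with
  | zero => constructor <;> [ring; (rw [zero_sub]; ring)]
  | succ k ih =>
    refine ⟨?_, by rw [add_sub_cancel_right]; exact ih.1⟩
    linear_combination h k + 2 * ih.1 - ih.2
  | pred k ih =>
    have hk := h (-k - 1)
    rw [sub_add_cancel] at hk
    refine ⟨ih.2, ?_⟩
    linear_combination hk - ih.1 + 2 * ih.2

/- Nonnegativity at the integers nearest to `-t / 2` gives `t ^ 2 ≤ 4 * q + 1`. Equality would make
`q` a product of two consecutive integers, hence even. -/
lemma sq_le_of_quadratic_nonneg {q t : ℤ} (hq : Odd q) (h : ∀ n : ℤ, 0 ≤ n ^ 2 + t * n + q) :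
    t ^ 2 ≤ 4 * q := by
  obtain ⟨k, rfl | rfl⟩ := Int.even_or_odd' t
  · nlinarith [h (-k)]
  · have hne : k * (k + 1) ≠ q := by
      rintro rfl
      exact Int.not_even_iff_odd.mpr hq (Int.even_mul_succ_self k)
    have hle : k * (k + 1) ≤ q := by nlinarith [h (-k)]
    nlinarith [lt_of_le_of_ne hle hne]

lemma sq_add_one_sub_le_of_parallelogram {G : Type*} [AddCommGroup G] {h : G → ℕ}
    (hpar : ∀ P Q, h (P + Q) + h (P - Q) = 2 * (h P + h Q)) {P Q : G} (hQ : h Q = 1)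
    (hP : Odd (h P)) : ((h P : ℤ) + 1 - h (P - Q)) ^ 2 ≤ 4 * h P := by
  have hquad := eq_quadratic_of_second_difference (d := fun n ↦ (h (P + n • Q) : ℤ)) fun n ↦ by
    have hn := hpar (P + n • Q) Q
    rw [hQ, add_assoc, add_sub_assoc, mul_add, mul_one] at hn
    rw [add_one_zsmul, sub_one_zsmul, ← sub_eq_add_neg]
    exact_mod_cast hn
  simp only [zero_zsmul, add_zero, neg_zsmul, one_zsmul, ← sub_eq_add_neg] at hquad
  refine sq_le_of_quadratic_nonneg (by exact_mod_cast hP) fun n ↦ ?_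
  rw [← hquad n]
  positivity

end SecondDifference

section VariableChange

variable {F : Type*} [Field F]

lemma equation_smul_iff (c : VariableChange F) (W : WeierstrassCurve F) (x y : F) :
    (c • W).toAffine.Equation x y ↔ W.toAffine.Equation ((c.u : F) ^ 2 * x + c.r)
      ((c.u : F) ^ 3 * y + (c.u : F) ^ 2 * c.s * x + c.t) := by
  rw [Affine.equation_iff', Affine.equation_iff', variableChange_a₁, variableChange_a₂,
    variableChange_a₃, variableChange_a₄, variableChange_a₆,
    ← mul_right_inj' (pow_ne_zero 6 c.u.ne_zero), mul_zero, Units.val_inv_eq_inv_val]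
  constructor <;> intro h <;> field_simp at h ⊢ <;> linear_combination h

lemma card_point_smul (c : VariableChange F) (W : WeierstrassCurve F) [W.IsElliptic] :
    Nat.card (c • W).toAffine.Point = Nat.card W.toAffine.Point := by
  have hu : (c.u : F) ≠ 0 := c.u.ne_zero
  let e : F × F ≃ F × F :=
    { toFun P := (c.u ^ 2 * P.1 + c.r, c.u ^ 3 * P.2 + c.u ^ 2 * c.s * P.1 + c.t)
      invFun P := ((P.1 - c.r) / c.u ^ 2, (P.2 - c.s * (P.1 - c.r) - c.t) / c.u ^ 3)
      left_inv P := by ext <;> (dsimp only; field_simp; ring)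
      right_inv P := by ext <;> (dsimp only; field_simp; ring) }
  exact Nat.card_congr <| (Affine.pointEquiv _).trans <|
    (Equiv.optionCongr (e.subtypeEquiv fun P ↦ equation_smul_iff c W P.1 P.2)).trans
      (Affine.pointEquiv _).symm

end VariableChange

section Hasse

lemma isElliptic_of_isShortNF {F : Type*} [Field F] (W : WeierstrassCurve F) [W.IsShortNF]
    (h2 : (2 : F) ≠ 0) (h : 4 * W.a₄ ^ 3 + 27 * W.a₆ ^ 2 ≠ 0) : W.IsElliptic where
  isUnit := by
    rw [Δ_of_isShortNF, show (-16 : F) = -2 ^ 4 by norm_num]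
    exact (mul_ne_zero (neg_ne_zero.mpr (pow_ne_zero 4 h2)) h).isUnit

variable {F : Type*} [Field F] [Fintype F] (E : WeierstrassCurve F) [E.IsElliptic]

theorem sq_card_add_one_sub_card_point_le_of_isCharNeTwoNF [E.IsCharNeTwoNF]
    (hF : ringChar F ≠ 2) :
    ((Fintype.card F : ℤ) + 1 - Nat.card E.toAffine.Point) ^ 2 ≤ 4 * Fintype.card F := by
  classical
  have hq : Odd (Fintype.card F) := Nat.odd_iff.mpr (FiniteField.odd_card_of_char_ne_two hF)
  have hφ : cubicPolynomial E * (cubicPolynomial E ^ (Fintype.card F / 2)) ^ 2 =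
      (cubicPolynomial E).comp (X ^ Fintype.card F) := by
    rw [cubicPolynomial_comp_X_pow_card, ← pow_mul, ← pow_succ',
      Nat.div_two_mul_two_add_one_of_odd hq]
  have hQ : cubicPolynomial E * 1 ^ 2 = (cubicPolynomial E).comp X := by simp
  have hne : (X ^ Fintype.card F : F[X]) ≠ X :=
    sub_ne_zero.mp (FiniteField.X_pow_card_sub_X_ne_zero F Fintype.one_lt_card)
  obtain ⟨u, v, w, huv, hw, hu, hv, hcard⟩ := exists_isCoprime_natDegree_eq_card_point E hF
  have hφQ := (xHeight_genericTwistPoint_sub hφ hQ hne huv hw hu hv).trans hcard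
  have hφ_height := (xHeight_genericTwistPoint hφ).trans (natDegree_X_pow _)
  have h := sq_add_one_sub_le_of_parallelogram
    (xHeight_add_add_xHeight_sub E (RatFunc.algebraMap_ne_zero (cubicPolynomial_ne_zero E)))
    ((xHeight_genericTwistPoint hQ).trans natDegree_X) (hφ_height ▸ hq)
  rwa [hφQ, hφ_height] at h

theorem sq_card_add_one_sub_card_point_le (hF : ringChar F ≠ 2) :
    ((Fintype.card F : ℤ) + 1 - Nat.card E.toAffine.Point) ^ 2 ≤ 4 * Fintype.card F := by
  let := invertibleOfNonzero (Ring.two_ne_zero hF)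
  rw [← card_point_smul E.toCharNeTwoNF E]
  exact sq_card_add_one_sub_card_point_le_of_isCharNeTwoNF _ hF

end Hasse

theorem stmt_4_general {F : Type*} [Field F] [Fintype F] (hF : ringChar F ≠ 2)
    (E : WeierstrassCurve F) [E.IsElliptic] :
    |(Fintype.card F : ℝ) + 1 - Nat.card E.toAffine.Point| ≤ 2 * √(Fintype.card F) := by
  refine abs_le_of_sq_le_sq ?_ (by positivity)
  rw [mul_pow, Real.sq_sqrt (Nat.cast_nonneg _)]
  norm_num only
  exact_mod_cast sq_card_add_one_sub_card_point_le E hF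

theorem stmt_4 (p : ℕ) [Fact p.Prime] (hp : 3 < p) (a b : ZMod p)
    (hD : 4 * a ^ 3 + 27 * b ^ 2 ≠ 0) :
    |(p : ℝ) + 1 - (((Finset.univ.filter
        (fun P : ZMod p × ZMod p => P.2 ^ 2 = P.1 ^ 3 + a * P.1 + b)).card + 1 : ℕ) : ℝ)|
      ≤ 2 * Real.sqrt p := by
  have hF : ringChar (ZMod p) ≠ 2 := by
    rw [ZMod.ringChar_zmod_n]
    omega
  let E : WeierstrassCurve (ZMod p) := ⟨0, 0, 0, a, b⟩
  have : E.IsShortNF := ⟨rfl, rfl, rfl⟩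
  have : E.IsElliptic := isElliptic_of_isShortNF E (Ring.two_ne_zero hF) hD
  have hE := stmt_4_general hF E
  rw [ZMod.card, card_point_eq_card_filter_add_one] at hE
  simpa only [eval_cubicPolynomial, E, zero_mul, add_zero] using hE
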